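/- arXiv:2602.15479 — 2 statements merged into one kernel-verified Lean document; each statement's English description precedes it below -/
import Mathlib

section
/- For every δ > 0 and every point (x,y) with x > -1, the quantities A = [β(α_x - α β_y) - 2α(β_x + α_y - β β_y)]/Δ and B = [2(α_x - α β_y) - β(β_x + α_y - β β_y)]/Δ both vanish, where α_x, α_y, β_x, β_y are the partial derivatives of α and β and Δ = 4α - β². -/
/-- Coefficient α of the δ-family. -/
noncomputable def alphaC (δ x y : ℝ) : ℝ := (y ^ 2 + δ ^ 2) / (1 + x) ^ 2

/-- Coefficient β of the δ-family. -/
noncomputable def betaC (x y : ℝ) : ℝ := -2 * y / (1 + x)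

/-!
Let `z` be a non-real root of the quadratic `T² + βT + α`, so that `α = |z|²` and `β = -2 Re z`.
Differentiating `z² + βz + α = 0` gives
`(2z + β)(z_x + z z_y) = -((α_x - αβ_y) + (β_x + α_y - ββ_y) z)`,
and dividing by `2z + β`, whose square is `-Δ`, gives `z_x + z z_y = A + B z`: the obstruction
measures the failure of `z` to solve the complex Burgers equation `z_x + z z_y = 0`. For the
δ-family the root is the self-similar solution `z = (y + iδ) / (1 + x)`.
-/

open Complex

/-- Vanishing at `(x, y)` of the transport obstruction of the quadratic `T² + βT + α`, in the
undivided form `α_x - αβ_y = 0` and `β_x + α_y - ββ_y = 0`, which implies `A = B = 0` and remains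
meaningful where `Δ = 4α - β²` is zero. Existence of the partial derivatives is included. -/
def ObstructionFreeAt (α β : ℝ → ℝ → ℝ) (x y : ℝ) : Prop :=
  ∃ ax ay bx by' : ℝ,
    HasDerivAt (fun t => α t y) ax x ∧
    HasDerivAt (fun t => α x t) ay y ∧
    HasDerivAt (fun t => β t y) bx x ∧
    HasDerivAt (fun t => β x t) by' y ∧
    ax - α x y * by' = 0 ∧
    bx + ay - β x y * by' = 0

theorem hasDerivAt_neg_two_mul_re {f : ℝ → ℂ} {f' : ℂ} {t : ℝ} (hf : HasDerivAt f f' t) :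
    HasDerivAt (fun s => -2 * (f s).re) (-2 * f'.re) t :=
  (reCLM.hasFDerivAt.comp_hasDerivAt t hf).const_mul (-2)

theorem norm_sq_transport_eq (z zx zy : ℂ) :
    2 * inner ℝ z zx - ‖z‖ ^ 2 * (-2 * zy.re) = 2 * inner ℝ z (zx + z * zy) := by
  simp only [Complex.inner, Complex.sq_norm, normSq_apply, add_re, add_im, mul_re, mul_im, conj_re,
    conj_im]
  ring

theorem neg_two_mul_re_transport_eq (z zx zy : ℂ) :
    -2 * zx.re + 2 * inner ℝ z zy - -2 * z.re * (-2 * zy.re) = -2 * (zx + z * zy).re := by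
  simp only [Complex.inner, add_re, mul_re, conj_re, conj_im]
  ring

theorem obstructionFreeAt_of_burgers {z : ℝ → ℝ → ℂ} {zx zy : ℂ} {x y : ℝ}
    (hzx : HasDerivAt (fun t => z t y) zx x) (hzy : HasDerivAt (fun t => z x t) zy y)
    (burgers : zx + z x y * zy = 0) :
    ObstructionFreeAt (fun s t => ‖z s t‖ ^ 2) (fun s t => -2 * (z s t).re) x y := by
  refine ⟨_, _, _, _, hzx.norm_sq, hzy.norm_sq, hasDerivAt_neg_two_mul_re hzx,
    hasDerivAt_neg_two_mul_re hzy, ?_, ?_⟩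
  · rw [norm_sq_transport_eq, burgers, inner_zero_right, mul_zero]
  · rw [neg_two_mul_re_transport_eq, burgers, zero_re, mul_zero]

section DeltaFamily

/-- The root `(y + iδ) / (1 + x)` of the quadratic `T² + βT + α` of the δ-family. -/
noncomputable def deltaRoot (δ x y : ℝ) : ℂ := (y + δ * I) / (1 + x)

variable (δ x y : ℝ)

theorem deltaRoot_eq_mk : deltaRoot δ x y = ⟨y / (1 + x), δ / (1 + x)⟩ := by
  rw [deltaRoot, mk_eq_add_mul_I]
  push_cast
  ring

theorem alphaC_eq_norm_sq_deltaRoot : alphaC δ x y = ‖deltaRoot δ x y‖ ^ 2 := by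
  rw [alphaC, deltaRoot_eq_mk, Complex.sq_norm, normSq_mk, ← sq, ← sq, div_pow, div_pow, add_div]

theorem betaC_eq_neg_two_mul_re_deltaRoot : betaC x y = -2 * (deltaRoot δ x y).re := by
  rw [betaC, deltaRoot_eq_mk, mul_div_assoc]

theorem hasDerivAt_deltaRoot_snd :
    HasDerivAt (fun t => deltaRoot δ x t) (1 / (1 + x)) y :=
  ((hasDerivAt_id y).ofReal_comp.add_const (δ * I)).div_const (1 + x : ℂ)

variable {x}

theorem hasDerivAt_deltaRoot_fst (hx : 1 + x ≠ 0) :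
    HasDerivAt (fun t => deltaRoot δ t y) (-(y + δ * I) / (1 + x) ^ 2) x := by
  have hden : HasDerivAt (fun t : ℝ => (1 + t : ℂ)) 1 x :=
    (hasDerivAt_id x).ofReal_comp.const_add 1
  have hx' : (1 + x : ℂ) ≠ 0 := mod_cast hx
  simpa [deltaRoot] using (hasDerivAt_const x (y + δ * I : ℂ)).fun_div hden hx'

theorem deltaRoot_burgers :
    -(y + δ * I) / (1 + x) ^ 2 + deltaRoot δ x y * (1 / (1 + x)) = 0 := by
  rw [deltaRoot, div_mul_div_comm, mul_one, ← sq, neg_div, neg_add_cancel]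

end DeltaFamily

theorem stmt_7_general (δ x y : ℝ) (hx : x ≠ -1) : ObstructionFreeAt (alphaC δ) betaC x y := by
  have hx' : 1 + x ≠ 0 := fun h => hx (eq_neg_of_add_eq_zero_right h)
  have hα : alphaC δ = fun s t => ‖deltaRoot δ s t‖ ^ 2 :=
    funext₂ (alphaC_eq_norm_sq_deltaRoot δ)
  have hβ : betaC = fun s t => -2 * (deltaRoot δ s t).re :=
    funext₂ (betaC_eq_neg_two_mul_re_deltaRoot δ)
  rw [hα, hβ]
  exact obstructionFreeAt_of_burgers (hasDerivAt_deltaRoot_fst δ y hx')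
    (hasDerivAt_deltaRoot_snd δ x y) (deltaRoot_burgers δ y)

/-- both components of the transport obstruction,
`A = [β(α_x - αβ_y) - 2α(β_x + α_y - ββ_y)]/Δ` and
`B = [2(α_x - αβ_y) - β(β_x + α_y - ββ_y)]/Δ` (with `Δ = 4α - β²`),
vanish at every point of Ω. -/
theorem stmt_7 (δ x y : ℝ) (hδ : 0 < δ) (hx : -1 < x) :
    ∃ ax ay bx by' : ℝ,
      HasDerivAt (fun t : ℝ => alphaC δ t y) ax x ∧
      HasDerivAt (fun t : ℝ => alphaC δ x t) ay y ∧
      HasDerivAt (fun t : ℝ => betaC t y) bx x ∧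
      HasDerivAt (fun t : ℝ => betaC x t) by' y ∧
      (betaC x y * (ax - alphaC δ x y * by')
          - 2 * alphaC δ x y * (bx + ay - betaC x y * by'))
        / (4 * alphaC δ x y - (betaC x y) ^ 2) = 0 ∧
      (2 * (ax - alphaC δ x y * by')
          - betaC x y * (bx + ay - betaC x y * by'))
        / (4 * alphaC δ x y - (betaC x y) ^ 2) = 0 := by
  obtain ⟨ax, ay, bx, by', hax, hay, hbx, hby, hα, hβ⟩ := stmt_7_general δ x y hx.ne'
  exact ⟨ax, ay, bx, by', hax, hay, hbx, hby, by simp [hα, hβ], by simp [hα, hβ]⟩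
end

section
/- Fix δ > 0 and let w = p + iq be a C¹ complex-valued function on the half-plane Ω = {(x,y) : x > -1} (p, q real-valued) satisfying the transport equation w_x + λ w_y = 0, where λ(x,y) = (y+iδ)/(1+x). Define a(x,y) = y/(1+x), b(x,y) = δ/(1+x), and set u = p - (a/b)q and v = q/b. Then (u,v) satisfies the system u_x - α v_y = 0 and v_x + u_y - β v_y = 0 on Ω, with α(x,y) = (y²+δ²)/(1+x)² and β(x,y) = -2y/(1+x). -/
open Complex

/-- The spectral parameter λ of the δ-family. -/
noncomputable def lamC (δ x y : ℝ) : ℂ := ((y : ℂ) + δ * Complex.I) / (1 + x)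

/-- Real part `a = y/(1+x)` of the spectral parameter. -/
noncomputable def aC (x y : ℝ) : ℝ := y / (1 + x)

/-- Imaginary part `b = δ/(1+x)` of the spectral parameter. -/
noncomputable def bC (δ x : ℝ) : ℝ := δ / (1 + x)

/-!
Off the real axis, `1, λ` is a real basis of `ℂ`, and `u`, `v` are the coordinates of `w` in it:
`w = u + λ v`. Differentiating and using `λ² = 2 (re λ) λ - |λ|²`,

`w_x + λ w_y = (u_x - |λ|² v_y) + λ (v_x + u_y + 2 (re λ) v_y) + (λ_x + λ λ_y) v`.

The last term vanishes because `λ` solves the complex Burgers equation `λ_x + λ λ_y = 0`; the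
real system is then the vanishing of both coordinates, with `α = |λ|²` and `β = -2 re λ`.
-/

/-- The first coordinate of `w` in the real basis `1, μ` of `ℂ`, for `μ` off the real axis. It
recovers `u` from `w` when `μ = λ`. -/
noncomputable def coordOne (μ w : ℂ) : ℝ := w.re - μ.re / μ.im * w.im

/-- The second coordinate of `w` in the real basis `1, μ` of `ℂ`, for `μ` off the real axis. It
recovers `v` from `w` when `μ = λ`. -/
noncomputable def coordSelf (μ w : ℂ) : ℝ := w.im / μ.im

theorem coordOne_add_mul_coordSelf {μ : ℂ} (hμ : μ.im ≠ 0) (w : ℂ) :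
    (coordOne μ w : ℂ) + μ * coordSelf μ w = w := by
  apply Complex.ext
  · simp only [coordOne, coordSelf, add_re, re_mul_ofReal, ofReal_re]
    ring
  · simp only [coordSelf, add_im, im_mul_ofReal, ofReal_im, zero_add]
    field_simp

theorem eq_zero_and_eq_zero_of_add_mul_eq_zero {μ : ℂ} (hμ : μ.im ≠ 0) {s t : ℝ}
    (h : (s : ℂ) + μ * t = 0) : s = 0 ∧ t = 0 := by
  have ht : t = 0 := by simpa [hμ] using congrArg im h
  exact ⟨by simpa [ht] using h, ht⟩

theorem sq_eq_two_re_mul_self_sub_normSq (μ : ℂ) : μ ^ 2 = 2 * μ.re * μ - normSq μ := by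
  have hsum := add_conj μ
  push_cast at hsum
  linear_combination μ * hsum - mul_conj μ

theorem hasDerivAt_re_comp {f : ℝ → ℂ} {f' : ℂ} {t : ℝ} (hf : HasDerivAt f f' t) :
    HasDerivAt (fun s ↦ (f s).re) f'.re t :=
  reCLM.hasFDerivAt.comp_hasDerivAt t hf

theorem hasDerivAt_im_comp {f : ℝ → ℂ} {f' : ℂ} {t : ℝ} (hf : HasDerivAt f f' t) :
    HasDerivAt (fun s ↦ (f s).im) f'.im t :=
  imCLM.hasFDerivAt.comp_hasDerivAt t hf

theorem exists_hasDerivAt_coords {μ w : ℝ → ℂ} {μ' w' : ℂ} {t : ℝ} (him : (μ t).im ≠ 0)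
    (hμ : HasDerivAt μ μ' t) (hw : HasDerivAt w w' t) :
    ∃ u' v' : ℝ, HasDerivAt (fun s ↦ coordOne (μ s) (w s)) u' t ∧
      HasDerivAt (fun s ↦ coordSelf (μ s) (w s)) v' t ∧
      w' = u' + μ t * v' + μ' * coordSelf (μ t) (w t) := by
  have hwim := hasDerivAt_im_comp hw
  have hμim := hasDerivAt_im_comp hμ
  have hu := (hasDerivAt_re_comp hw).sub (((hasDerivAt_re_comp hμ).div hμim him).mul hwim)
  have hv := hwim.div hμim him
  refine ⟨_, _, hu, hv, ?_⟩
  have hdecomp : w =ᶠ[nhds t] fun s ↦ coordOne (μ s) (w s) + μ s * coordSelf (μ s) (w s) :=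
    (hμim.continuousAt.eventually_ne him).mono fun s hs ↦
      (coordOne_add_mul_coordSelf hs (w s)).symm
  have hw_eq := (hw.congr_of_eventuallyEq hdecomp.symm).unique
    (hu.ofReal_comp.add (hμ.mul hv.ofReal_comp))
  exact hw_eq.trans (by ring)

theorem stmt_9_general {lam w : ℝ → ℝ → ℂ} {lamx lamy wx wy : ℂ} {x y : ℝ}
    (him : (lam x y).im ≠ 0)
    (hlamx : HasDerivAt (fun t ↦ lam t y) lamx x) (hlamy : HasDerivAt (fun t ↦ lam x t) lamy y)
    (hburgers : lamx + lam x y * lamy = 0)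
    (hwx : HasDerivAt (fun t ↦ w t y) wx x) (hwy : HasDerivAt (fun t ↦ w x t) wy y)
    (htransport : wx + lam x y * wy = 0) :
    ∃ ux uy vx vy : ℝ,
      HasDerivAt (fun t ↦ coordOne (lam t y) (w t y)) ux x ∧
      HasDerivAt (fun t ↦ coordOne (lam x t) (w x t)) uy y ∧
      HasDerivAt (fun t ↦ coordSelf (lam t y) (w t y)) vx x ∧
      HasDerivAt (fun t ↦ coordSelf (lam x t) (w x t)) vy y ∧
      ux - normSq (lam x y) * vy = 0 ∧
      vx + uy - -2 * (lam x y).re * vy = 0 := by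
  obtain ⟨ux, vx, hux, hvx, hwx_eq⟩ :=
    exists_hasDerivAt_coords (μ := (lam · y)) (w := (w · y)) him hlamx hwx
  obtain ⟨uy, vy, huy, hvy, hwy_eq⟩ :=
    exists_hasDerivAt_coords him hlamy hwy
  refine ⟨ux, uy, vx, vy, hux, huy, hvx, hvy, eq_zero_and_eq_zero_of_add_mul_eq_zero him ?_⟩
  rw [hwx_eq, hwy_eq] at htransport
  push_cast
  linear_combination htransport - (coordSelf (lam x y) (w x y) : ℂ) * hburgers
    - (vy : ℂ) * sq_eq_two_re_mul_self_sub_normSq (lam x y)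

theorem lamC_eq_aC_add_bC_mul_I (δ x y : ℝ) : lamC δ x y = aC x y + bC δ x * I := by
  simp only [lamC, aC, bC]
  push_cast
  ring

theorem lamC_re (δ x y : ℝ) : (lamC δ x y).re = aC x y := by
  simp [lamC_eq_aC_add_bC_mul_I]

theorem lamC_im (δ x y : ℝ) : (lamC δ x y).im = bC δ x := by
  simp [lamC_eq_aC_add_bC_mul_I]

theorem alphaC_eq_normSq_lamC (δ x y : ℝ) : alphaC δ x y = normSq (lamC δ x y) := by
  simp only [normSq_apply, lamC_re, lamC_im, alphaC, aC, bC, add_div, ← div_pow]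
  ring

theorem betaC_eq_neg_two_mul_lamC_re (δ x y : ℝ) : betaC x y = -2 * (lamC δ x y).re := by
  simp only [lamC_re, betaC, aC]
  ring

theorem hasDerivAt_lamC_fst (δ : ℝ) {x : ℝ} (y : ℝ) (hx : 1 + x ≠ 0) :
    HasDerivAt (fun t ↦ lamC δ t y) (-lamC δ x y / (1 + x)) x := by
  have hx' : (1 + x : ℂ) ≠ 0 := mod_cast hx
  have hden : HasDerivAt (fun t : ℝ ↦ (1 + t : ℂ)) 1 x :=
    (hasDerivAt_id x).ofReal_comp.const_add 1
  refine ((hasDerivAt_const x ((y : ℂ) + δ * I)).div hden hx').congr_deriv ?_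
  unfold lamC
  field_simp
  ring

theorem hasDerivAt_lamC_snd (δ x y : ℝ) :
    HasDerivAt (fun t ↦ lamC δ x t) (1 / (1 + x)) y :=
  ((hasDerivAt_id y).ofReal_comp.add_const _).div_const _

theorem hasDerivAt_ofReal_add_ofReal_mul_I {f g : ℝ → ℝ} {f' g' t : ℝ}
    (hf : HasDerivAt f f' t) (hg : HasDerivAt g g' t) :
    HasDerivAt (fun s ↦ (f s : ℂ) + g s * I) (f' + g' * I) t :=
  hf.ofReal_comp.add (hg.ofReal_comp.mul_const I)

/-- if `w = p + iq` is a C¹ solution of the transport equation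
`w_x + λ w_y = 0` on Ω, then `u = p - (a/b)q`, `v = q/b` satisfy the real system
`u_x - α v_y = 0`, `v_x + u_y - β v_y = 0` on Ω. -/
theorem stmt_9 (δ : ℝ) (hδ : 0 < δ)
    (p q px py qx qy : ℝ → ℝ → ℝ)
    (hpx : ∀ x y : ℝ, -1 < x → HasDerivAt (fun t : ℝ => p t y) (px x y) x)
    (hpy : ∀ x y : ℝ, -1 < x → HasDerivAt (fun t : ℝ => p x t) (py x y) y)
    (hqx : ∀ x y : ℝ, -1 < x → HasDerivAt (fun t : ℝ => q t y) (qx x y) x)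
    (hqy : ∀ x y : ℝ, -1 < x → HasDerivAt (fun t : ℝ => q x t) (qy x y) y)
    (hpxc : ContinuousOn (fun pt : ℝ × ℝ => px pt.1 pt.2) {pt : ℝ × ℝ | -1 < pt.1})
    (hpyc : ContinuousOn (fun pt : ℝ × ℝ => py pt.1 pt.2) {pt : ℝ × ℝ | -1 < pt.1})
    (hqxc : ContinuousOn (fun pt : ℝ × ℝ => qx pt.1 pt.2) {pt : ℝ × ℝ | -1 < pt.1})
    (hqyc : ContinuousOn (fun pt : ℝ × ℝ => qy pt.1 pt.2) {pt : ℝ × ℝ | -1 < pt.1})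
    (htransport : ∀ x y : ℝ, -1 < x →
      ((px x y : ℂ) + (qx x y : ℂ) * Complex.I)
        + lamC δ x y * ((py x y : ℂ) + (qy x y : ℂ) * Complex.I) = 0)
    (u v : ℝ → ℝ → ℝ)
    (hu : ∀ x y : ℝ, u x y = p x y - (aC x y / bC δ x) * q x y)
    (hv : ∀ x y : ℝ, v x y = q x y / bC δ x) :
    ∀ x y : ℝ, -1 < x →
      ∃ Ux Uy Vx Vy : ℝ,
        HasDerivAt (fun t : ℝ => u t y) Ux x ∧
        HasDerivAt (fun t : ℝ => u x t) Uy y ∧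
        HasDerivAt (fun t : ℝ => v t y) Vx x ∧
        HasDerivAt (fun t : ℝ => v x t) Vy y ∧
        Ux - alphaC δ x y * Vy = 0 ∧
        Vx + Uy - betaC x y * Vy = 0 := by
  intro x y hx
  have hx1 : 1 + x ≠ 0 := by linarith
  have him : (lamC δ x y).im ≠ 0 := by
    rw [lamC_im]
    exact div_ne_zero hδ.ne' hx1
  have hu' (x y : ℝ) : u x y = coordOne (lamC δ x y) (p x y + q x y * I) := by
    simp [hu, coordOne, lamC_re, lamC_im]
  have hv' (x y : ℝ) : v x y = coordSelf (lamC δ x y) (p x y + q x y * I) := by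
    simp [hv, coordSelf, lamC_im]
  simp only [hu', hv', alphaC_eq_normSq_lamC, betaC_eq_neg_two_mul_lamC_re δ]
  exact stmt_9_general (w := fun x y ↦ p x y + q x y * I) him
    (hasDerivAt_lamC_fst δ y hx1) (hasDerivAt_lamC_snd δ x y) (by ring)
    (hasDerivAt_ofReal_add_ofReal_mul_I (hpx x y hx) (hqx x y hx))
    (hasDerivAt_ofReal_add_ofReal_mul_I (hpy x y hx) (hqy x y hx)) (htransport x y hx)
end
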